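/- arXiv:1707.02964 — 7 statements merged into one kernel-verified Lean document; each statement's English description precedes it below -/
import Mathlib

section
/- For all pairs of multi-indices α = (α1,α2) and β = (β1,β2) in ℕ², the 2×2 matrix with entries y(2α1,2α2), y(α1+β1,α2+β2) on the first row and y(α1+β1,α2+β2), y(2β1,2β2) on the second row is positive semidefinite; equivalently, y(2α1,2α2) ≥ 0, y(2β1,2β2) ≥ 0, and y(2α1,2α2)*y(2β1,2β2) ≥ y(α1+β1,α2+β2)^2. -/
/-!
For signs `s, t ∈ {1, -1}` the numerator `1 + s + t - s t` is always `±2`, so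
`momSeq m n = ± 1 / √(2^(m+n))`, with sign `+` when `m` and `n` are even. Hence
`momSeq m n ^ 2 = 1 / 2^(m+n)` and `momSeq (2m) (2n) = 1 / 2^(m+n)`: every `2 × 2` matrix in question
has positive diagonal and determinant exactly zero.
-/

/-- The moment sequence from the counterexample. -/
noncomputable def momSeq (a1 a2 : ℕ) : ℝ :=
  (1 + (-1 : ℝ)^a1 + (-1 : ℝ)^a2 - (-1 : ℝ)^(a1+a2)) / (2 * Real.sqrt (2^(a1+a2)))

theorem momSeq_sq (m n : ℕ) : momSeq m n ^ 2 = 1 / 2 ^ (m + n) := by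
  have h : (1 + (-1 : ℝ)^m + (-1 : ℝ)^n - (-1 : ℝ)^(m+n)) ^ 2 = 4 := by
    rw [pow_add]
    rcases neg_one_pow_eq_or ℝ m with h | h <;> rcases neg_one_pow_eq_or ℝ n with h' | h' <;>
      rw [h, h'] <;> norm_num
  rw [momSeq, div_pow, h, mul_pow, Real.sq_sqrt (by positivity)]
  field_simp
  norm_num

theorem momSeq_two_mul (m n : ℕ) : momSeq (2 * m) (2 * n) = 1 / 2 ^ (m + n) := by
  have h : (2 : ℝ) ^ (2 * m + 2 * n) = (2 ^ (m + n)) ^ 2 := by ring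
  rw [momSeq, h, Real.sqrt_sq (by positivity), pow_add, pow_mul, pow_mul]
  norm_num
  field_simp

theorem posSemidef_of_pos_of_sq_le {x w z : ℝ} (hx : 0 < x) (h : w ^ 2 ≤ x * z) :
    (!![x, w; w, z] : Matrix (Fin 2) (Fin 2) ℝ).PosSemidef := by
  refine Matrix.PosSemidef.of_dotProduct_mulVec_nonneg ?_ fun v => ?_
  · ext i j
    fin_cases i <;> fin_cases j <;> simp
  · simp only [Matrix.mulVec, dotProduct, Fin.sum_univ_two, Pi.star_apply, star_trivial,
      Matrix.of_apply, Matrix.cons_val_zero, Matrix.cons_val_one]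
    -- Completing the square, after scaling by the positive entry `x`.
    refine nonneg_of_mul_nonneg_right (a := x) ?_ hx
    nlinarith [sq_nonneg (x * v 0 + w * v 1), mul_nonneg (sub_nonneg.2 h) (sq_nonneg (v 1))]

theorem stmt_7 : ∀ a1 a2 b1 b2 : ℕ,
    (Matrix.PosSemidef
      !![momSeq (2*a1) (2*a2), momSeq (a1+b1) (a2+b2);
         momSeq (a1+b1) (a2+b2), momSeq (2*b1) (2*b2)]) ∧
    momSeq (2*a1) (2*a2) ≥ 0 ∧ momSeq (2*b1) (2*b2) ≥ 0 ∧
    momSeq (2*a1) (2*a2) * momSeq (2*b1) (2*b2) ≥ momSeq (a1+b1) (a2+b2)^2 := by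
  intro a1 a2 b1 b2
  have pos (m n : ℕ) : 0 < momSeq (2 * m) (2 * n) := by
    rw [momSeq_two_mul]
    positivity
  have h : momSeq (a1+b1) (a2+b2) ^ 2 = momSeq (2*a1) (2*a2) * momSeq (2*b1) (2*b2) := by
    rw [momSeq_sq, momSeq_two_mul, momSeq_two_mul, one_div_mul_one_div, ← pow_add,
      add_add_add_comm]
  exact ⟨posSemidef_of_pos_of_sq_le (pos a1 a2) h.le, (pos a1 a2).le, (pos b1 b2).le, h.le⟩
end

section
/- For every polynomial σ in two real variables, the Riesz functional of y applied to the product σ(x1,x2) * (1 - x1^2 - x2^2) equals 0. -/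
/-- The Riesz functional associated to the moment sequence. -/
noncomputable def riesz (p : MvPolynomial (Fin 2) ℝ) : ℝ :=
  ∑ α ∈ p.support, MvPolynomial.coeff α p * momSeq (α 0) (α 1)

theorem momSeq_eq_atoms (a b : ℕ) :
    momSeq a b = ((√2)⁻¹ ^ a * (√2)⁻¹ ^ b + (√2)⁻¹ ^ a * (-(√2)⁻¹) ^ b
      + (-(√2)⁻¹) ^ a * (√2)⁻¹ ^ b - (-(√2)⁻¹) ^ a * (-(√2)⁻¹) ^ b) / 2 := by
  have hsqrt : √((2 : ℝ) ^ (a + b)) = √2 ^ (a + b) := by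
    rw [Real.sqrt_eq_iff_mul_self_eq (by positivity) (by positivity), ← mul_pow,
      Real.mul_self_sqrt (by norm_num)]
  rw [momSeq, hsqrt, neg_pow (√2)⁻¹ a, neg_pow (√2)⁻¹ b, div_eq_mul_inv, mul_inv, ← inv_pow]
  ring

/-- `riesz` is a signed combination of four point evaluations on the unit circle. -/
theorem riesz_eq_eval (p : MvPolynomial (Fin 2) ℝ) :
    riesz p = (MvPolynomial.eval ![(√2)⁻¹, (√2)⁻¹] p + MvPolynomial.eval ![(√2)⁻¹, -(√2)⁻¹] p
      + MvPolynomial.eval ![-(√2)⁻¹, (√2)⁻¹] p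
      - MvPolynomial.eval ![-(√2)⁻¹, -(√2)⁻¹] p) / 2 := by
  simp only [riesz, MvPolynomial.eval_eq', ← Finset.sum_add_distrib, ← Finset.sum_sub_distrib,
    Finset.sum_div]
  refine Finset.sum_congr rfl fun α _ => ?_
  rw [momSeq_eq_atoms]
  simp only [Fin.prod_univ_two, Matrix.cons_val_zero, Matrix.cons_val_one]
  ring

theorem stmt_10 : ∀ σ : MvPolynomial (Fin 2) ℝ,
    riesz (σ * (1 - (MvPolynomial.X 0)^2 - (MvPolynomial.X 1)^2)) = 0 := by
  intro σ
  have hs : (1 : ℝ) - (√2)⁻¹ ^ 2 - (√2)⁻¹ ^ 2 = 0 := by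
    rw [inv_pow, Real.sq_sqrt (by norm_num)]
    norm_num
  simp only [riesz_eq_eval, map_mul, map_sub, map_one, map_pow, MvPolynomial.eval_X,
    Matrix.cons_val_zero, Matrix.cons_val_one, neg_sq, hs]
  norm_num
end

section
/- For every SDSOS polynomial σ in two real variables, the Riesz functional of y applied to σ is nonnegative: L_y(σ) ≥ 0. -/
/-- A polynomial is SDSOS if it is a finite sum of squares of polynomials
with at most two monomial terms each. -/
def IsSDSOS (σ : MvPolynomial (Fin 2) ℝ) : Prop :=
  ∃ (n : ℕ) (p q : Fin n → ℝ) (a b : Fin n → (Fin 2 →₀ ℕ)),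
    σ = ∑ k, (MvPolynomial.monomial (a k) (p k) + MvPolynomial.monomial (b k) (q k))^2

theorem riesz_eq_sum_of_subset {p : MvPolynomial (Fin 2) ℝ} {s : Finset (Fin 2 →₀ ℕ)}
    (h : p.support ⊆ s) :
    riesz p = ∑ α ∈ s, MvPolynomial.coeff α p * momSeq (α 0) (α 1) := by
  refine Finset.sum_subset h fun α _ hα => ?_
  rw [MvPolynomial.notMem_support_iff.mp hα, zero_mul]

theorem riesz_add (p q : MvPolynomial (Fin 2) ℝ) : riesz (p + q) = riesz p + riesz q := by
  classical
  rw [riesz_eq_sum_of_subset (MvPolynomial.support_add (p := p) (q := q)),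
    riesz_eq_sum_of_subset (p := p) Finset.subset_union_left,
    riesz_eq_sum_of_subset (p := q) Finset.subset_union_right, ← Finset.sum_add_distrib]
  simp only [MvPolynomial.coeff_add, add_mul]

theorem riesz_zero : riesz 0 = 0 := by simp [riesz]

theorem riesz_sum {ι : Type*} (s : Finset ι) (f : ι → MvPolynomial (Fin 2) ℝ) :
    riesz (∑ k ∈ s, f k) = ∑ k ∈ s, riesz (f k) :=
  map_sum (⟨⟨riesz, riesz_zero⟩, riesz_add⟩ : MvPolynomial (Fin 2) ℝ →+ ℝ) f s

theorem riesz_monomial (a : Fin 2 →₀ ℕ) (c : ℝ) :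
    riesz (MvPolynomial.monomial a c) = c * momSeq (a 0) (a 1) := by
  rw [riesz_eq_sum_of_subset (MvPolynomial.support_monomial_subset (s := a) (a := c))]
  simp

theorem sqrt_two_pow (n : ℕ) : Real.sqrt (2 ^ n) = Real.sqrt 2 ^ n := by
  rw [Real.sqrt_eq_iff_eq_sq (by positivity) (by positivity), ← pow_mul, mul_comm, pow_mul,
    Real.sq_sqrt (by norm_num)]

theorem momSeq_eq_or_neg (m n : ℕ) :
    momSeq m n = (Real.sqrt 2)⁻¹ ^ (m + n) ∨ momSeq m n = -(Real.sqrt 2)⁻¹ ^ (m + n) := by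
  have h : Real.sqrt 2 ^ (m + n) ≠ 0 := by positivity
  unfold momSeq
  rw [sqrt_two_pow, inv_pow, pow_add (-1 : ℝ)]
  rcases neg_one_pow_eq_or ℝ m with hm | hm <;> rcases neg_one_pow_eq_or ℝ n with hn | hn <;>
    rw [hm, hn]
  · left; field_simp; norm_num
  · left; field_simp; norm_num
  · left; field_simp; norm_num
  · right; field_simp; norm_num

theorem momSeq_double (m n : ℕ) :
    momSeq (m + m) (n + n) = ((Real.sqrt 2)⁻¹ ^ (m + n)) ^ 2 := by
  have h : Real.sqrt 2 ^ (m + n) ≠ 0 := by positivity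
  unfold momSeq
  rw [sqrt_two_pow, inv_pow, show m + m + (n + n) = (m + n) * 2 by ring, pow_mul (Real.sqrt 2),
    ← two_mul, ← two_mul, mul_comm (m + n) 2]
  simp only [pow_mul, neg_one_sq, one_pow]
  field_simp
  norm_num

theorem riesz_binomial_sq_nonneg (a b : Fin 2 →₀ ℕ) (p q : ℝ) :
    0 ≤ riesz ((MvPolynomial.monomial a p + MvPolynomial.monomial b q) ^ 2) := by
  have hsq : (MvPolynomial.monomial a p + MvPolynomial.monomial b q) ^ 2 =
      MvPolynomial.monomial (a + a) (p * p) + MvPolynomial.monomial (a + b) (2 * (p * q)) +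
        MvPolynomial.monomial (b + b) (q * q) := by
    have h2 : MvPolynomial.monomial (a + b) (2 * (p * q)) =
        2 * (MvPolynomial.monomial a p * MvPolynomial.monomial b q) := by
      rw [two_mul, two_mul, map_add, MvPolynomial.monomial_mul]
    rw [h2, ← MvPolynomial.monomial_mul, ← MvPolynomial.monomial_mul]
    ring
  rw [hsq, riesz_add, riesz_add, riesz_monomial, riesz_monomial, riesz_monomial]
  simp only [Finsupp.add_apply, momSeq_double]
  have hexp : a 0 + b 0 + (a 1 + b 1) = (a 0 + a 1) + (b 0 + b 1) := by ring
  rcases momSeq_eq_or_neg (a 0 + b 0) (a 1 + b 1) with h | h <;> rw [h, hexp, pow_add _ (a 0 + a 1)]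
  · linarith [sq_nonneg (p * (Real.sqrt 2)⁻¹ ^ (a 0 + a 1) + q * (Real.sqrt 2)⁻¹ ^ (b 0 + b 1))]
  · linarith [sq_nonneg (p * (Real.sqrt 2)⁻¹ ^ (a 0 + a 1) - q * (Real.sqrt 2)⁻¹ ^ (b 0 + b 1))]

theorem stmt_11 : ∀ σ : MvPolynomial (Fin 2) ℝ, IsSDSOS σ → riesz σ ≥ 0 := by
  rintro σ ⟨n, p, q, a, b, rfl⟩
  rw [riesz_sum]
  exact Finset.sum_nonneg fun k _ => riesz_binomial_sq_nonneg (a k) (b k) (p k) (q k)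
end

section
/- If λ is a real number and σ0, σ1 are SDSOS polynomials in two real variables such that the polynomial identity (-2 + x1 + x2)^2 - λ = σ0(x1,x2) + σ1(x1,x2)*(1 - x1^2 - x2^2) holds, then λ ≤ 4*(1 - √2). -/
/-- The functional `p ↦ p (c, c) + p (-c, c) + p (c, -c) - p (-c, -c)` is nonnegative on SDSOS
polynomials. -/
lemma IsSDSOS.signed_eval_nonneg {σ : MvPolynomial (Fin 2) ℝ} (h : IsSDSOS σ) (c : ℝ) :
    0 ≤ MvPolynomial.eval ![c, c] σ + MvPolynomial.eval ![-c, c] σ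
      + MvPolynomial.eval ![c, -c] σ - MvPolynomial.eval ![-c, -c] σ := by
  obtain ⟨n, p, q, a, b, rfl⟩ := h
  simp only [map_sum, ← Finset.sum_add_distrib, ← Finset.sum_sub_distrib]
  refine Finset.sum_nonneg fun k _ => ?_
  simp only [map_pow, map_add, MvPolynomial.eval_monomial,
    Finsupp.prod_fintype _ _ (fun _ => pow_zero _), Fin.prod_univ_two,
    Matrix.cons_val_zero, Matrix.cons_val_one]
  have h₁ := sq_nonneg (p k * (c ^ a k 0 * c ^ a k 1) + q k * (c ^ b k 0 * c ^ b k 1))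
  have h₂ := sq_nonneg (p k * (c ^ a k 0 * c ^ a k 1) - q k * (c ^ b k 0 * c ^ b k 1))
  -- Only the parities of the exponents matter: they decide the sign of the cross term.
  rcases Nat.even_or_odd (a k 0) with h0 | h0 <;> rcases Nat.even_or_odd (a k 1) with h1 | h1 <;>
    rcases Nat.even_or_odd (b k 0) with h2 | h2 <;> rcases Nat.even_or_odd (b k 1) with h3 | h3 <;>
    simp only [h0.neg_pow, h1.neg_pow, h2.neg_pow, h3.neg_pow] <;> linarith

theorem stmt_12 : ∀ (lam : ℝ) (σ0 σ1 : MvPolynomial (Fin 2) ℝ),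
    IsSDSOS σ0 → IsSDSOS σ1 →
    (MvPolynomial.C (-2) + MvPolynomial.X 0 + MvPolynomial.X 1)^2 - MvPolynomial.C lam =
      σ0 + σ1 * (1 - (MvPolynomial.X 0)^2 - (MvPolynomial.X 1)^2) →
    lam ≤ 4*(1 - Real.sqrt 2) := by
  intro lam σ0 σ1 h0 _ h
  have hL := h0.signed_eval_nonneg (Real.sqrt 2 / 2)
  have hs : Real.sqrt 2 ^ 2 = 2 := Real.sq_sqrt (by norm_num)
  generalize Real.sqrt 2 = s at *
  have key : ∀ x y : ℝ, x ^ 2 + y ^ 2 = 1 →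
      MvPolynomial.eval ![x, y] σ0 = (-2 + x + y) ^ 2 - lam := by
    intro x y hxy
    have e := congrArg (MvPolynomial.eval ![x, y]) h
    simp only [map_sub, map_add, map_mul, map_pow, map_one, MvPolynomial.eval_C,
      MvPolynomial.eval_X, Matrix.cons_val_zero, Matrix.cons_val_one] at e
    linear_combination -e + MvPolynomial.eval ![x, y] σ1 * hxy
  rw [key _ _ (by linarith), key _ _ (by linarith), key _ _ (by linarith),
    key _ _ (by linarith)] at hL
  linarith
end

section
/- There do not exist SDSOS polynomials σ0, σ1 in two real variables such that the polynomial identity (-2 + x1 + x2)^2 = σ0(x1,x2) + σ1(x1,x2)*(1 - x1^2 - x2^2) holds, even though (-2 + x1 + x2)^2 > 0 whenever 1 - x1^2 - x2^2 ≥ 0. -/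
lemma eval_monomial_fin_two (a : Fin 2 →₀ ℕ) (p x y : ℝ) :
    MvPolynomial.eval ![x, y] (MvPolynomial.monomial a p) = p * (x ^ a 0 * y ^ a 1) := by
  rw [MvPolynomial.eval_monomial, Finsupp.prod_fintype _ _ (by simp)]
  simp [Fin.prod_univ_two]

lemma binomial_sq_neg_neg_le (p q x y : ℝ) (i j k l : ℕ) :
    (p * ((-x) ^ i * (-y) ^ j) + q * ((-x) ^ k * (-y) ^ l)) ^ 2 ≤
      (p * (x ^ i * y ^ j) + q * (x ^ k * y ^ l)) ^ 2 +
      (p * ((-x) ^ i * y ^ j) + q * ((-x) ^ k * y ^ l)) ^ 2 +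
      (p * (x ^ i * (-y) ^ j) + q * (x ^ k * (-y) ^ l)) ^ 2 := by
  have hs := sq_nonneg (p * (x ^ i * y ^ j) + q * (x ^ k * y ^ l))
  have hd := sq_nonneg (p * (x ^ i * y ^ j) - q * (x ^ k * y ^ l))
  rcases Nat.even_or_odd i with hi | hi <;> rcases Nat.even_or_odd j with hj | hj <;>
  rcases Nat.even_or_odd k with hk | hk <;> rcases Nat.even_or_odd l with hl | hl <;>
  simp only [hi.neg_pow, hj.neg_pow, hk.neg_pow, hl.neg_pow] <;> nlinarith only [hs, hd]

/-- The linear inequality between values at sign changes of a point that separates SDSOS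
polynomials from general sums of squares. -/
lemma IsSDSOS.eval_neg_neg_le {σ : MvPolynomial (Fin 2) ℝ} (h : IsSDSOS σ) (x y : ℝ) :
    MvPolynomial.eval ![-x, -y] σ ≤ MvPolynomial.eval ![x, y] σ +
      MvPolynomial.eval ![-x, y] σ + MvPolynomial.eval ![x, -y] σ := by
  obtain ⟨n, p, q, a, b, rfl⟩ := h
  simp only [map_sum, map_pow, map_add, eval_monomial_fin_two, ← Finset.sum_add_distrib]
  exact Finset.sum_le_sum fun k _ => binomial_sq_neg_neg_le _ _ _ _ _ _ _ _

theorem stmt_13 :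
    (¬ ∃ σ0 σ1 : MvPolynomial (Fin 2) ℝ, IsSDSOS σ0 ∧ IsSDSOS σ1 ∧
      (MvPolynomial.C (-2) + MvPolynomial.X 0 + MvPolynomial.X 1)^2 =
        σ0 + σ1 * (1 - (MvPolynomial.X 0)^2 - (MvPolynomial.X 1)^2)) ∧
    (∀ x1 x2 : ℝ, 1 - x1^2 - x2^2 ≥ 0 → (-2 + x1 + x2)^2 > 0) := by
  constructor
  · rintro ⟨σ0, σ1, h0, -, h⟩
    have key : ∀ x y : ℝ, 1 - x ^ 2 - y ^ 2 = 0 →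
        MvPolynomial.eval ![x, y] σ0 = (-2 + x + y) ^ 2 := by
      intro x y hxy
      have := congrArg (MvPolynomial.eval ![x, y]) h
      simp only [map_add, map_mul, map_sub, map_pow, map_one, MvPolynomial.eval_C,
        MvPolynomial.eval_X, Matrix.cons_val_zero, Matrix.cons_val_one, hxy, mul_zero,
        add_zero] at this
      exact this.symm
    have hle := h0.eval_neg_neg_le (3 / 5) (4 / 5)
    rw [key _ _ (by norm_num), key _ _ (by norm_num), key _ _ (by norm_num),
      key _ _ (by norm_num)] at hle
    norm_num at hle
  · intro x y h
    -- On the disc `(x + y)² ≤ 2 (x² + y²) ≤ 2 < 4`.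
    have : x + y < 2 := by nlinarith [sq_nonneg (x - y)]
    exact sq_pos_of_neg (by linarith)
end

section
/- For every natural number r, the Riesz functional of y applied to the polynomial (x1^2 + x2^2)^r equals 1. -/
theorem momSeq_eq (a b : ℕ) : momSeq a b =
    ((√2)⁻¹ ^ a * (√2)⁻¹ ^ b + (-(√2)⁻¹) ^ a * (√2)⁻¹ ^ b
      + (√2)⁻¹ ^ a * (-(√2)⁻¹) ^ b - (-(√2)⁻¹) ^ a * (-(√2)⁻¹) ^ b) / 2 := by
  have h : √((2 : ℝ) ^ (a + b)) = √2 ^ a * √2 ^ b := by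
    rw [← pow_add, Real.sqrt_eq_iff_mul_self_eq (by positivity) (by positivity), ← mul_pow,
      Real.mul_self_sqrt (by norm_num)]
  rw [momSeq, h, neg_pow (√2)⁻¹ a, neg_pow (√2)⁻¹ b, inv_pow, inv_pow, pow_add]
  have h2 : √(2 : ℝ) ≠ 0 := by positivity
  field_simp

/-- The Riesz functional is integration against a signed measure with four atoms. -/
theorem riesz_eq (p : MvPolynomial (Fin 2) ℝ) : riesz p =
    (MvPolynomial.eval ![(√2)⁻¹, (√2)⁻¹] p + MvPolynomial.eval ![-(√2)⁻¹, (√2)⁻¹] p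
      + MvPolynomial.eval ![(√2)⁻¹, -(√2)⁻¹] p
      - MvPolynomial.eval ![-(√2)⁻¹, -(√2)⁻¹] p) / 2 := by
  simp only [riesz, MvPolynomial.eval_eq', ← Finset.sum_add_distrib, ← Finset.sum_sub_distrib,
    Finset.sum_div]
  refine Finset.sum_congr rfl fun α _ => ?_
  simp only [momSeq_eq, Fin.prod_univ_two, Matrix.cons_val_zero, Matrix.cons_val_one]
  ring

theorem stmt_16 : ∀ r : ℕ,
    riesz (((MvPolynomial.X 0)^2 + (MvPolynomial.X 1)^2)^r) = 1 := by
  intro r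
  have h : ((√(2 : ℝ))⁻¹) ^ 2 + ((√(2 : ℝ))⁻¹) ^ 2 = 1 := by
    rw [inv_pow, Real.sq_sqrt (by norm_num)]
    norm_num
  simp only [riesz_eq, map_pow, map_add, MvPolynomial.eval_X, Matrix.cons_val_zero,
    Matrix.cons_val_one, neg_sq, h, one_pow]
  norm_num
end

section
/- For every natural number r and every real number λ, if there exist SDSOS polynomials σ0, σ1 in two real variables such that the polynomial identity (x1^2 + x2^2)^r * ((-2 + x1 + x2)^2 - λ) = σ0(x1,x2) + σ1(x1,x2)*(1 - x1^2 - x2^2) holds, then λ ≤ 4*(1 - √2); in particular λ < 0, so the r-SDSOS hierarchy does not converge to the global value 2*(3 - 2*√2). -/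
/-- The linear functional `p ↦ p(t, t) + p(t, -t) + p(-t, t) - p(-t, -t)`. It is twice the
evaluation at `(t, t)` with the sign of every monomial odd in both variables flipped. -/
noncomputable def signedSum (t : ℝ) (p : MvPolynomial (Fin 2) ℝ) : ℝ :=
  MvPolynomial.eval ![t, t] p + MvPolynomial.eval ![t, -t] p +
    MvPolynomial.eval ![-t, t] p - MvPolynomial.eval ![-t, -t] p

lemma eval_monomial_pair (x y c : ℝ) (a : Fin 2 →₀ ℕ) :
    MvPolynomial.eval ![x, y] (MvPolynomial.monomial a c) = c * (x ^ a 0 * y ^ a 1) := by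
  rw [MvPolynomial.eval_monomial, Finsupp.prod_fintype _ _ (by simp)]
  simp [Fin.prod_univ_two]

lemma signedSum_binomial_sq_nonneg (t p q : ℝ) (a b : Fin 2 →₀ ℕ) :
    0 ≤ signedSum t ((MvPolynomial.monomial a p + MvPolynomial.monomial b q) ^ 2) := by
  simp only [signedSum, map_pow, map_add, eval_monomial_pair, neg_pow t]
  generalize t ^ a 0 = A0
  generalize t ^ a 1 = A1
  generalize t ^ b 0 = B0
  generalize t ^ b 1 = B1
  -- In each parity case the value is `2 (A + B)^2` or `2 (A - B)^2`.
  rcases neg_one_pow_eq_or ℝ (a 0) with h0 | h0 <;>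
  rcases neg_one_pow_eq_or ℝ (a 1) with h1 | h1 <;>
  rcases neg_one_pow_eq_or ℝ (b 0) with h2 | h2 <;>
  rcases neg_one_pow_eq_or ℝ (b 1) with h3 | h3 <;>
  rw [h0, h1, h2, h3] <;>
  linarith [sq_nonneg (p * (A0 * A1) + q * (B0 * B1)),
    sq_nonneg (p * (A0 * A1) - q * (B0 * B1))]

lemma IsSDSOS.signedSum_nonneg {σ : MvPolynomial (Fin 2) ℝ} (h : IsSDSOS σ) (t : ℝ) :
    0 ≤ signedSum t σ := by
  obtain ⟨n, p, q, a, b, rfl⟩ := h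
  have key := Finset.sum_nonneg fun k (_ : k ∈ Finset.univ) =>
    signedSum_binomial_sq_nonneg t (p k) (q k) (a k) (b k)
  simpa only [signedSum, map_sum, Finset.sum_add_distrib, Finset.sum_sub_distrib] using key

theorem stmt_17 : ∀ (r : ℕ) (lam : ℝ),
    (∃ σ0 σ1 : MvPolynomial (Fin 2) ℝ, IsSDSOS σ0 ∧ IsSDSOS σ1 ∧
      ((MvPolynomial.X 0)^2 + (MvPolynomial.X 1)^2)^r *
        ((MvPolynomial.C (-2) + MvPolynomial.X 0 + MvPolynomial.X 1)^2 - MvPolynomial.C lam) =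
        σ0 + σ1 * (1 - (MvPolynomial.X 0)^2 - (MvPolynomial.X 1)^2)) →
    lam ≤ 4*(1 - Real.sqrt 2) ∧ lam < 0 := by
  rintro r lam ⟨σ0, σ1, h0, -, h⟩
  have hs : Real.sqrt 2 ^ 2 = 2 := Real.sq_sqrt (by norm_num)
  have hs1 : 1 < Real.sqrt 2 := Real.lt_sqrt_of_sq_lt (by norm_num)
  have ht : (Real.sqrt 2 / 2) ^ 2 = 1 / 2 := by rw [div_pow, hs]; norm_num
  have hL := h0.signedSum_nonneg (Real.sqrt 2 / 2)
  have hev : ∀ x y : ℝ, x ^ 2 = 1 / 2 → y ^ 2 = 1 / 2 →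
      MvPolynomial.eval ![x, y] σ0 = (-2 + x + y) ^ 2 - lam := by
    intro x y hx hy
    have e := congrArg (MvPolynomial.eval ![x, y]) h
    simp only [map_mul, map_pow, map_add, map_sub, MvPolynomial.eval_X, MvPolynomial.eval_C,
      Matrix.cons_val_zero, Matrix.cons_val_one, map_one, hx, hy] at e
    norm_num at e
    linarith
  have ht' : (-(Real.sqrt 2 / 2)) ^ 2 = 1 / 2 := by rw [neg_sq, ht]
  rw [signedSum, hev _ _ ht ht, hev _ _ ht ht', hev _ _ ht' ht, hev _ _ ht' ht'] at hL
  have hle : lam ≤ 4 * (1 - Real.sqrt 2) := by nlinarith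
  exact ⟨hle, by linarith⟩
end
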